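/- arXiv:1506.01959 — 2 statements merged into one kernel-verified Lean document; each statement's English description precedes it below -/
import Mathlib

section
/- Let A ∈ ℝ^{I×J}, λ > 0, P*_λ = (A Aᵀ + λ I_I)⁻¹ A, F_λ(P) = ‖I_J − Pᵀ A‖_F² + λ‖P‖_F², and G_λ(P) = F_λ(P) − F_λ(P*_λ). For a real J×J matrix N, let σ_1(N) ≥ … ≥ σ_J(N) denote its singular values (the square roots of the eigenvalues of Nᵀ N) arranged in decreasing order. Then for every P ∈ ℝ^{I×J}: ∑_{r=1}^J |σ_r(Pᵀ A) − σ_r((P*_λ)ᵀ A)|² ≤ G_λ(P) − λ‖P − P*_λ‖_F². -/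
open Matrix BigOperators

/-- Squared Frobenius norm of a real matrix. -/
noncomputable def frobSq {m n : Type*} [Fintype m] [Fintype n] (M : Matrix m n ℝ) : ℝ :=
  ∑ i, ∑ j, (M i j) ^ 2

/-- The regularized objective `F_λ(P) = ‖I_J − Pᵀ A‖_F² + λ‖P‖_F²`. -/
noncomputable def Fpinv {I J : ℕ} (A : Matrix (Fin I) (Fin J) ℝ) (lam : ℝ)
    (P : Matrix (Fin I) (Fin J) ℝ) : ℝ :=
  frobSq ((1 : Matrix (Fin J) (Fin J) ℝ) - Pᵀ * A) + lam * frobSq P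

/-- The regularized minimizer `P*_λ = (A Aᵀ + λ I_I)⁻¹ A`. -/
noncomputable def PstarId {I J : ℕ} (A : Matrix (Fin I) (Fin J) ℝ) (lam : ℝ) :
    Matrix (Fin I) (Fin J) ℝ :=
  (A * Aᵀ + lam • (1 : Matrix (Fin I) (Fin I) ℝ))⁻¹ * A

/-- Both `W` and its transpose are contractions for the Euclidean norm. -/
def SvpContr {J : ℕ} (W : Matrix (Fin J) (Fin J) ℝ) : Prop :=
  ∀ x : Fin J → ℝ, (W *ᵥ x) ⬝ᵥ (W *ᵥ x) ≤ x ⬝ᵥ x ∧ (Wᵀ *ᵥ x) ⬝ᵥ (Wᵀ *ᵥ x) ≤ x ⬝ᵥ x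

theorem svp_frobSq_trace {m n : Type*} [Fintype m] [Fintype n] (M : Matrix m n ℝ) :
    frobSq M = (Mᵀ * M).trace := by
  simp only [frobSq, Matrix.trace, Matrix.diag, Matrix.mul_apply, Matrix.transpose_apply]
  rw [Finset.sum_comm]
  simp [sq]

theorem svp_contr_of_diag {J : ℕ} (U : Matrix (Fin J) (Fin J) ℝ) (d : Fin J → ℝ)
    (hd : ∀ r, d r ≤ 1) (h : Uᵀ * U = diagonal d) : SvpContr U := by
  have key : ∀ y : Fin J → ℝ, (U *ᵥ y) ⬝ᵥ (U *ᵥ y) ≤ y ⬝ᵥ y := by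
    intro y
    have : (U *ᵥ y) ⬝ᵥ (U *ᵥ y) = y ⬝ᵥ ((Uᵀ * U) *ᵥ y) := by
      rw [← Matrix.mulVec_mulVec, Matrix.dotProduct_mulVec, Matrix.dotProduct_mulVec,
        Matrix.vecMul_transpose, ← Matrix.dotProduct_mulVec]
    rw [this, h]
    simp only [dotProduct, Matrix.mulVec_diagonal]
    refine Finset.sum_le_sum fun i _ => ?_
    nlinarith [hd i, mul_self_nonneg (y i)]
  intro x
  refine ⟨key x, ?_⟩
  set y := Uᵀ *ᵥ x with hy
  have h1 : 0 ≤ (x - U *ᵥ y) ⬝ᵥ (x - U *ᵥ y) :=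
    Finset.sum_nonneg fun i _ => mul_self_nonneg _
  have h2 : x ⬝ᵥ (U *ᵥ y) = y ⬝ᵥ y := by
    rw [Matrix.dotProduct_mulVec, ← Matrix.mulVec_transpose]
  have h3 : (U *ᵥ y) ⬝ᵥ x = y ⬝ᵥ y := by rw [dotProduct_comm, h2]
  rw [sub_dotProduct, dotProduct_sub, dotProduct_sub, h2, h3] at h1
  linarith [key y]

theorem svp_contr_mul {J : ℕ} {U X : Matrix (Fin J) (Fin J) ℝ} (hU : SvpContr U)
    (hX : SvpContr X) : SvpContr (Uᵀ * X) := by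
  intro x
  rw [Matrix.transpose_mul, Matrix.transpose_transpose, ← Matrix.mulVec_mulVec,
    ← Matrix.mulVec_mulVec]
  exact ⟨((hU _).2).trans (hX _).1, ((hX _).2).trans (hU _).1⟩

theorem svp_contr_col {J : ℕ} {C : Matrix (Fin J) (Fin J) ℝ} (hC : SvpContr C) (s : Fin J) :
    ∑ r, C r s ^ 2 ≤ 1 := by
  have := (hC (Pi.single s 1)).1
  simpa [dotProduct, sq, Pi.single_apply] using this

theorem svp_contr_row {J : ℕ} {C : Matrix (Fin J) (Fin J) ℝ} (hC : SvpContr C) (r : Fin J) :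
    ∑ s, C r s ^ 2 ≤ 1 := by
  have := (hC (Pi.single r 1)).2
  simpa [dotProduct, sq, Pi.single_apply] using this

theorem svp_svd {J : ℕ} (M : Matrix (Fin J) (Fin J) ℝ) (hS : (Mᵀ * M).IsHermitian)
    (σ : Fin J → ℝ) (π : Equiv.Perm (Fin J))
    (hσ : ∀ r, σ r = Real.sqrt (hS.eigenvalues (π r))) :
    (∃ U V : Matrix (Fin J) (Fin J) ℝ, M = U * diagonal σ * Vᵀ ∧ SvpContr U ∧ SvpContr V) ∧
      frobSq M = ∑ r, σ r ^ 2 := by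
  have hpos : ∀ i, 0 ≤ hS.eigenvalues i := by
    have : (Mᵀ * M).PosSemidef := by
      simpa using Matrix.posSemidef_conjTranspose_mul_self M
    exact fun i => this.eigenvalues_nonneg i
  have hsq : ∀ r, σ r ^ 2 = hS.eigenvalues (π r) := fun r => by
    rw [hσ, Real.sq_sqrt (hpos _)]
  constructor
  · set E : Matrix (Fin J) (Fin J) ℝ := hS.eigenvectorUnitary.1 with hE
    have hEE : Eᵀ * E = 1 := by
      have := Matrix.mem_unitaryGroup_iff'.1 hS.eigenvectorUnitary.2
      simpa [Matrix.star_eq_conjTranspose] using this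
    have hsp : Mᵀ * M = E * diagonal hS.eigenvalues * Eᵀ := by
      have := hS.spectral_theorem
      rw [Unitary.conjStarAlgAut_apply] at this
      simpa [Matrix.star_eq_conjTranspose, Function.comp_def] using this
    have hsp' : Eᵀ * (Mᵀ * M) * E = diagonal hS.eigenvalues := by
      calc Eᵀ * (Mᵀ * M) * E = Eᵀ * (E * diagonal hS.eigenvalues * Eᵀ) * E :=
            congrArg (fun Z => Eᵀ * Z * E) hsp
        _ = (Eᵀ * E) * diagonal hS.eigenvalues * (Eᵀ * E) := by simp only [Matrix.mul_assoc]
        _ = _ := by rw [hEE]; simp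
    set V := E.submatrix id π with hV
    have hVV : Vᵀ * V = 1 := by
      have : Vᵀ * V = (Eᵀ * E).submatrix π π := by
        ext i j; simp [hV, Matrix.mul_apply]
      rw [this, hEE]; simp
    have hVM : (M * V)ᵀ * (M * V) = diagonal (fun r => σ r ^ 2) := by
      have : (M * V)ᵀ * (M * V) = (Eᵀ * (Mᵀ * M) * E).submatrix π π := by
        have h1 : M * V = (M * E).submatrix id π := by
          ext i j; simp [hV, Matrix.mul_apply]
        rw [h1]
        have h2 : Eᵀ * (Mᵀ * M) * E = (M * E)ᵀ * (M * E) := by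
          simp only [Matrix.transpose_mul, Matrix.mul_assoc]
        rw [h2]
        ext i j; simp [Matrix.mul_apply]
      rw [this, hsp']
      ext i j
      simp [Matrix.diagonal_apply, hsq]
    refine ⟨M * V * diagonal (fun r => (σ r)⁻¹), V, ?_, ?_, ?_⟩
    · have h0 : M * V * diagonal (fun r => (σ r)⁻¹) * diagonal σ = M * V := by
        rw [Matrix.mul_assoc, Matrix.diagonal_mul_diagonal]
        ext i r
        rw [Matrix.mul_diagonal]
        by_cases h : σ r = 0
        · have hz := congrFun (congrFun hVM r) r
          rw [Matrix.mul_apply, Matrix.diagonal_apply_eq, h] at hz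
          simp only [Matrix.transpose_apply] at hz
          have hz' : ∑ j, (M * V) j r * (M * V) j r = 0 := by rw [hz]; norm_num
          have := (Finset.sum_eq_zero_iff_of_nonneg
            (fun j _ => mul_self_nonneg ((M * V) j r))).1 hz' i (Finset.mem_univ _)
          rw [mul_self_eq_zero.1 this]; simp
        · rw [inv_mul_cancel₀ h, mul_one]
      rw [h0, Matrix.mul_assoc, mul_eq_one_comm.1 hVV, Matrix.mul_one]
    · refine svp_contr_of_diag _ (fun r => (σ r)⁻¹ * σ r ^ 2 * (σ r)⁻¹) ?_ ?_
      · intro r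
        by_cases h : σ r = 0
        · simp [h]
        · have : (σ r)⁻¹ * σ r ^ 2 * (σ r)⁻¹ = 1 := by field_simp
          exact this.le
      · rw [Matrix.transpose_mul, Matrix.diagonal_transpose]
        calc _ = diagonal (fun r => (σ r)⁻¹) * ((M * V)ᵀ * (M * V)) *
              diagonal (fun r => (σ r)⁻¹) := by simp only [Matrix.mul_assoc]
          _ = _ := by rw [hVM, Matrix.diagonal_mul_diagonal, Matrix.diagonal_mul_diagonal]
    · exact svp_contr_of_diag _ (fun _ => 1) (fun _ => le_rfl) (by rw [hVV]; simp)
  · rw [svp_frobSq_trace, hS.trace_eq_sum_eigenvalues]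
    simp only [hsq]
    exact (Equiv.sum_comp π (fun r => hS.eigenvalues r)).symm

theorem svp_layers : ∀ {n : ℕ} (f : Fin n → ℝ), Antitone f → (∀ r, 0 ≤ f r) →
    ∃ α : Fin n → ℝ, (∀ k, 0 ≤ α k) ∧ ∀ r, f r = ∑ k, α k * (if r ≤ k then 1 else 0)
  | 0, _, _, _ => ⟨fun _ => 0, fun _ => le_rfl, fun r => r.elim0⟩
  | n + 1, f, hf, h0 => by
    obtain ⟨α, hα, h⟩ := svp_layers (fun r : Fin n => f r.castSucc - f (Fin.last n))
      (fun a b hab => by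
        have := hf (Fin.castSucc_le_castSucc_iff.2 hab)
        simpa using this)
      (fun r => sub_nonneg.2 (hf (Fin.le_last _)))
    refine ⟨Fin.snoc α (f (Fin.last n)), ?_, ?_⟩
    · intro k
      refine Fin.lastCases ?_ (fun k => ?_) k
      · simpa using h0 _
      · simpa using hα k
    · intro r
      rw [Fin.sum_univ_castSucc]
      refine Fin.lastCases ?_ (fun r => ?_) r
      · simp [Fin.le_def, Nat.not_le.2 (Fin.is_lt _)]
      · have := h r
        simp only [Fin.snoc_castSucc, Fin.snoc_last, Fin.castSucc_le_castSucc_iff, ← this,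
          Fin.le_last, if_true]
        ring

theorem svp_rearr {n : ℕ} (f g : Fin n → ℝ) (hf : Antitone f) (hg : Antitone g)
    (hf0 : ∀ r, 0 ≤ f r) (hg0 : ∀ r, 0 ≤ g r) (D : Fin n → Fin n → ℝ)
    (hD : ∀ r s, 0 ≤ D r s) (hrow : ∀ r, ∑ s, D r s ≤ 1) (hcol : ∀ s, ∑ r, D r s ≤ 1) :
    ∑ r, ∑ s, f r * g s * D r s ≤ ∑ r, f r * g r := by
  obtain ⟨α, hα, hfα⟩ := svp_layers f hf hf0
  obtain ⟨β, hβ, hgβ⟩ := svp_layers g hg hg0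
  have gen : ∀ B : Fin n → Fin n → ℝ, ∑ r, ∑ s, f r * g s * B r s =
      ∑ k, ∑ l, α k * β l * ∑ r, ∑ s,
        (if r ≤ k then 1 else 0) * (if s ≤ l then 1 else 0) * B r s := by
    intro B
    have e1 : ∀ r s, f r * g s * B r s = ∑ k, ∑ l, α k * β l *
        ((if r ≤ k then 1 else 0) * (if s ≤ l then 1 else 0) * B r s) := by
      intro r s
      rw [hfα r, hgβ s, Finset.sum_mul_sum, Finset.sum_mul]
      refine Finset.sum_congr rfl fun k _ => ?_
      rw [Finset.sum_mul]
      refine Finset.sum_congr rfl fun l _ => ?_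
      ring
    simp only [e1, Finset.mul_sum]
    calc _ = ∑ r, ∑ k, ∑ s, ∑ l, α k * β l *
        ((if r ≤ k then 1 else 0) * (if s ≤ l then 1 else 0) * B r s) :=
          Finset.sum_congr rfl fun r _ => Finset.sum_comm
      _ = ∑ k, ∑ r, ∑ s, ∑ l, α k * β l *
        ((if r ≤ k then 1 else 0) * (if s ≤ l then 1 else 0) * B r s) := Finset.sum_comm
      _ = ∑ k, ∑ r, ∑ l, ∑ s, α k * β l *
        ((if r ≤ k then 1 else 0) * (if s ≤ l then 1 else 0) * B r s) :=
          Finset.sum_congr rfl fun k _ => Finset.sum_congr rfl fun r _ => Finset.sum_comm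
      _ = _ := Finset.sum_congr rfl fun k _ => Finset.sum_comm
  have hR : ∑ r, f r * g r = ∑ r, ∑ s, f r * g s * (if r = s then 1 else 0) := by simp
  rw [hR, gen, gen]
  refine Finset.sum_le_sum fun k _ => Finset.sum_le_sum fun l _ =>
    mul_le_mul_of_nonneg_left ?_ (mul_nonneg (hα k) (hβ l))
  have hR2 : ∑ r, ∑ s, (if r ≤ k then (1 : ℝ) else 0) * (if s ≤ l then 1 else 0) *
      (if r = s then 1 else 0) = ∑ r, (if r ≤ k then (1 : ℝ) else 0) * (if r ≤ l then 1 else 0) := by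
    simp
  rw [hR2]
  rcases le_total k l with h | h
  · refine Finset.sum_le_sum fun r _ => ?_
    by_cases hr : r ≤ k
    · simp only [hr, hr.trans h, if_true, one_mul]
      refine le_trans (Finset.sum_le_sum fun s _ => ?_) (hrow r)
      split_ifs <;> simp [hD]
    · simp [hr]
  · rw [Finset.sum_comm]
    refine Finset.sum_le_sum fun s _ => ?_
    by_cases hs : s ≤ l
    · simp only [hs, hs.trans h, if_true, mul_one]
      refine le_trans (Finset.sum_le_sum fun r _ => ?_) (hcol s)
      split_ifs <;> simp [hD]
    · simp [hs]

theorem svp_vonNeumann {J : ℕ} (U V X Y : Matrix (Fin J) (Fin J) ℝ) (hU : SvpContr U)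
    (hV : SvpContr V) (hX : SvpContr X) (hY : SvpContr Y) (σ τ : Fin J → ℝ)
    (hσ : Antitone σ) (hτ : Antitone τ) (hσ0 : ∀ r, 0 ≤ σ r) (hτ0 : ∀ r, 0 ≤ τ r) :
    ((U * diagonal σ * Vᵀ)ᵀ * (X * diagonal τ * Yᵀ)).trace ≤ ∑ r, σ r * τ r := by
  have hC := svp_contr_mul hU hX
  have hB := svp_contr_mul hV hY
  set C := Uᵀ * X with hCdef
  set B := Vᵀ * Y with hBdef
  have h1 : ((U * diagonal σ * Vᵀ)ᵀ * (X * diagonal τ * Yᵀ)).trace =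
      ∑ r, ∑ s, σ r * τ s * (C r s * B r s) := by
    have : ((U * diagonal σ * Vᵀ)ᵀ * (X * diagonal τ * Yᵀ)).trace =
        ((diagonal σ * C * diagonal τ) * Bᵀ).trace := by
      have e : (U * diagonal σ * Vᵀ)ᵀ * (X * diagonal τ * Yᵀ) =
          V * (diagonal σ * C * diagonal τ * Yᵀ) := by
        simp only [hCdef, Matrix.transpose_mul, Matrix.transpose_transpose,
          Matrix.diagonal_transpose, Matrix.mul_assoc]
      rw [e, Matrix.trace_mul_comm, hBdef, Matrix.transpose_mul, Matrix.transpose_transpose]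
      simp only [Matrix.mul_assoc]
    rw [this]
    simp only [Matrix.trace, Matrix.diag, Matrix.mul_apply (M := diagonal σ * C * diagonal τ),
      Matrix.mul_diagonal, Matrix.diagonal_mul, Matrix.transpose_apply]
    refine Finset.sum_congr rfl fun r _ => Finset.sum_congr rfl fun s _ => ?_
    ring
  rw [h1]
  refine le_trans ?_ (svp_rearr σ τ hσ hτ hσ0 hτ0 (fun r s => (C r s ^ 2 + B r s ^ 2) / 2)
    (fun r s => by positivity) ?_ ?_)
  · refine Finset.sum_le_sum fun r _ => Finset.sum_le_sum fun s _ =>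
      mul_le_mul_of_nonneg_left ?_ (mul_nonneg (hσ0 r) (hτ0 s))
    nlinarith [sq_nonneg (C r s - B r s)]
  · intro r
    rw [← Finset.sum_div, Finset.sum_add_distrib]
    linarith [svp_contr_row hC r, svp_contr_row hB r]
  · intro s
    rw [← Finset.sum_div, Finset.sum_add_distrib]
    linarith [svp_contr_col hC s, svp_contr_col hB s]

theorem svp_frobSq_add {m n : Type*} [Fintype m] [Fintype n] (M N : Matrix m n ℝ) :
    frobSq (M + N) = frobSq M + 2 * (Mᵀ * N).trace + frobSq N := by
  have h : (Nᵀ * M).trace = (Mᵀ * N).trace := by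
    rw [← Matrix.trace_transpose, Matrix.transpose_mul, Matrix.transpose_transpose]
  simp only [svp_frobSq_trace, Matrix.transpose_add, Matrix.add_mul, Matrix.mul_add,
    Matrix.trace_add, h]
  ring

theorem svp_frobSq_neg {m n : Type*} [Fintype m] [Fintype n] (M : Matrix m n ℝ) :
    frobSq (-M) = frobSq M := by
  simp [frobSq]

theorem svp_normal {I J : ℕ} (A : Matrix (Fin I) (Fin J) ℝ) (lam : ℝ) (hlam : 0 < lam) :
    (A * Aᵀ + lam • (1 : Matrix (Fin I) (Fin I) ℝ)) * PstarId A lam = A := by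
  have hpd : (A * Aᵀ + lam • (1 : Matrix (Fin I) (Fin I) ℝ)).PosDef := by
    refine Matrix.PosDef.posSemidef_add ?_ ?_
    · simpa using Matrix.posSemidef_self_mul_conjTranspose A
    · exact Matrix.PosDef.one.smul hlam
  have hu := hpd.isUnit
  rw [PstarId, ← Matrix.mul_assoc, Matrix.mul_nonsing_inv _ ((Matrix.isUnit_iff_isUnit_det _).1 hu),
    Matrix.one_mul]

theorem svp_gap {I J : ℕ} (A : Matrix (Fin I) (Fin J) ℝ) (lam : ℝ) (hlam : 0 < lam)
    (P : Matrix (Fin I) (Fin J) ℝ) :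
    (Fpinv A lam P - Fpinv A lam (PstarId A lam)) - lam * frobSq (P - PstarId A lam) =
      frobSq (Pᵀ * A - (PstarId A lam)ᵀ * A) := by
  have hn := svp_normal A lam hlam
  set Q := PstarId A lam with hQ
  obtain ⟨D, hD⟩ : ∃ D, P = Q + D := ⟨P - Q, by simp⟩
  subst hD
  have e1 : (1 : Matrix (Fin J) (Fin J) ℝ) - (Q + D)ᵀ * A = (1 - Qᵀ * A) + -(Dᵀ * A) := by
    rw [Matrix.transpose_add, Matrix.add_mul]; abel
  have e2 : (Q + D)ᵀ * A - Qᵀ * A = Dᵀ * A := by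
    rw [Matrix.transpose_add, Matrix.add_mul]; abel
  have e3 : Q + D - Q = D := by abel
  have e4 : (((1 : Matrix (Fin J) (Fin J) ℝ) - Qᵀ * A)ᵀ * (-(Dᵀ * A))).trace
      = - lam * (Qᵀ * D).trace := by
    have h1 : A - A * Aᵀ * Q = lam • Q := by
      rw [Matrix.add_mul, Matrix.smul_mul, Matrix.one_mul] at hn
      rw [sub_eq_iff_eq_add, add_comm]; exact hn.symm
    have h2 : (((1 : Matrix (Fin J) (Fin J) ℝ) - Qᵀ * A)ᵀ * (-(Dᵀ * A))).trace
        = -(Dᵀ * (A - A * Aᵀ * Q)).trace := by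
      rw [Matrix.mul_neg, Matrix.trace_neg, Matrix.trace_mul_comm]
      simp only [Matrix.transpose_sub, Matrix.transpose_mul, Matrix.transpose_transpose,
        Matrix.transpose_one, Matrix.mul_sub, Matrix.mul_one, Matrix.mul_assoc]
    have h3 : (Dᵀ * Q).trace = (Qᵀ * D).trace := by
      rw [← Matrix.trace_transpose, Matrix.transpose_mul, Matrix.transpose_transpose]
    rw [h2, h1, Matrix.mul_smul, Matrix.trace_smul, h3, smul_eq_mul]; ring
  rw [Fpinv, Fpinv, e1, e2, e3, svp_frobSq_add, svp_frobSq_add, e4, svp_frobSq_neg]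
  ring

/-- Singular value perturbation bound: if `σ_1 ≥ … ≥ σ_J` and `τ_1 ≥ … ≥ τ_J` are the
decreasingly ordered singular values (square roots of the eigenvalues of `NᵀN`) of
`Pᵀ A` and of `(P*_λ)ᵀ A` respectively, then
`∑_r |σ_r − τ_r|² ≤ G_λ(P) − λ‖P − P*_λ‖_F²`, where `G_λ(P) = F_λ(P) − F_λ(P*_λ)`. -/
theorem singular_value_perturbation_bound {I J : ℕ}
    (A : Matrix (Fin I) (Fin J) ℝ) (lam : ℝ) (hlam : 0 < lam)
    (P : Matrix (Fin I) (Fin J) ℝ)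
    (hS : ((Pᵀ * A)ᵀ * (Pᵀ * A)).IsHermitian)
    (hT : (((PstarId A lam)ᵀ * A)ᵀ * ((PstarId A lam)ᵀ * A)).IsHermitian)
    (σs τs : Fin J → ℝ) (hσa : Antitone σs) (hτa : Antitone τs)
    (hσ : ∃ π : Equiv.Perm (Fin J), ∀ r, σs r = Real.sqrt (hS.eigenvalues (π r)))
    (hτ : ∃ π : Equiv.Perm (Fin J), ∀ r, τs r = Real.sqrt (hT.eigenvalues (π r))) :
    ∑ r, |σs r - τs r| ^ 2 ≤
      (Fpinv A lam P - Fpinv A lam (PstarId A lam)) -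
        lam * frobSq (P - PstarId A lam) := by
  rw [svp_gap A lam hlam P]
  obtain ⟨π, hπ⟩ := hσ
  obtain ⟨ρ, hρ⟩ := hτ
  obtain ⟨⟨U, V, hM, hU, hV⟩, hMf⟩ := svp_svd _ hS σs π hπ
  obtain ⟨⟨X, Y, hN, hX, hY⟩, hNf⟩ := svp_svd _ hT τs ρ hρ
  have hvn := svp_vonNeumann U V X Y hU hV hX hY σs τs hσa hτa
    (fun r => by rw [hπ]; exact Real.sqrt_nonneg _) (fun r => by rw [hρ]; exact Real.sqrt_nonneg _)
  rw [← hM, ← hN] at hvn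
  rw [sub_eq_add_neg (Pᵀ * A), svp_frobSq_add, svp_frobSq_neg, hMf, hNf, Matrix.mul_neg,
    Matrix.trace_neg]
  have : ∑ r, |σs r - τs r| ^ 2 = ∑ r, σs r ^ 2 - 2 * ∑ r, σs r * τs r + ∑ r, τs r ^ 2 := by
    rw [Finset.mul_sum, ← Finset.sum_sub_distrib, ← Finset.sum_add_distrib]
    refine Finset.sum_congr rfl fun r _ => ?_
    rw [sq_abs]; ring
  rw [this]
  linarith
end

section
/- Let A ∈ ℝ^{I×J}, λ ≥ 0, and F_λ(P) = ‖I_J − Pᵀ A‖_F² + λ‖P‖_F². Then for every P ∈ ℝ^{I×J}: F_λ(P) ≥ J − rank(A). Moreover, for λ > 0 the minimum value satisfies F_λ(P*_λ) ≤ J, where P*_λ = (A Aᵀ + λ I_I)⁻¹ A. -/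
open Matrix BigOperators

theorem frobSq_eq_trace {m n : Type*} [Fintype m] [Fintype n] (M : Matrix m n ℝ) :
    frobSq M = trace (Mᵀ * M) := by
  unfold frobSq
  rw [Finset.sum_comm]
  simp [trace, Matrix.mul_apply, sq]

theorem frobSq_nonneg {m n : Type*} [Fintype m] [Fintype n] (M : Matrix m n ℝ) :
    0 ≤ frobSq M := by
  unfold frobSq
  positivity

theorem exists_kernel_basis {I J : ℕ} (A : Matrix (Fin I) (Fin J) ℝ) :
    ∃ (k : ℕ) (U : Matrix (Fin J) (Fin k) ℝ), k + A.rank = J ∧ Uᵀ * U = 1 ∧ A * U = 0 := by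
  let L := Matrix.toEuclideanLin A
  let b := stdOrthonormalBasis ℝ (LinearMap.ker L)
  refine ⟨Module.finrank ℝ (LinearMap.ker L), Matrix.of fun j i => (b i : EuclideanSpace ℝ (Fin J)) j, ?_, ?_, ?_⟩
  · have h := LinearMap.finrank_range_add_finrank_ker L
    rw [finrank_euclideanSpace_fin] at h
    have h2 : A.rank = Module.finrank ℝ (LinearMap.range L) := by
      rw [Matrix.rank_eq_finrank_range_toLin A (PiLp.basisFun 2 ℝ _)
        (PiLp.basisFun 2 ℝ _), ← Matrix.toLpLin_eq_toLin]
    omega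
  · ext i j
    have h := orthonormal_iff_ite.mp b.orthonormal i j
    rw [Submodule.coe_inner, PiLp.inner_apply] at h
    simp only [Matrix.mul_apply, Matrix.transpose_apply, Matrix.of_apply, Matrix.one_apply]
    rw [← h]
    refine Finset.sum_congr rfl fun x _ => ?_
    exact mul_comm _ _
  · ext i j
    have h : L (b j : EuclideanSpace ℝ (Fin J)) = 0 := (b j).2
    have h' := congrArg (fun v : EuclideanSpace ℝ (Fin I) => v i) h
    rw [Matrix.mul_apply]
    exact h'

theorem Fpinv_lower {I J : ℕ} (A : Matrix (Fin I) (Fin J) ℝ)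
    (P : Matrix (Fin I) (Fin J) ℝ) :
    (J : ℝ) - (A.rank : ℝ) ≤ frobSq ((1 : Matrix (Fin J) (Fin J) ℝ) - Pᵀ * A) := by
  obtain ⟨k, U, hk, hU, hA⟩ := exists_kernel_basis A
  set M := (1 : Matrix (Fin J) (Fin J) ℝ) - Pᵀ * A with hM
  have hMU : M * U = U := by
    rw [hM, Matrix.sub_mul, Matrix.mul_assoc, hA]; simp
  clear_value M
  have h0 := frobSq_nonneg (M - U * Uᵀ)
  have tk : trace (Uᵀ * U) = (k : ℝ) := by rw [hU]; simp
  have t1 : trace (U * Uᵀ * M) = (k : ℝ) := by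
    rw [← tk, Matrix.mul_assoc, Matrix.trace_mul_comm, Matrix.mul_assoc, hMU]
  have t2 : trace (Mᵀ * (U * Uᵀ)) = (k : ℝ) := by
    rw [← t1, ← Matrix.trace_transpose]; simp
  have t3 : trace (U * Uᵀ * (U * Uᵀ)) = (k : ℝ) := by
    rw [Matrix.mul_assoc, ← Matrix.mul_assoc Uᵀ, hU, Matrix.one_mul, Matrix.trace_mul_comm, tk]
  rw [frobSq_eq_trace, Matrix.transpose_sub, Matrix.transpose_mul, Matrix.transpose_transpose,
    Matrix.sub_mul, Matrix.mul_sub, Matrix.mul_sub, Matrix.trace_sub, Matrix.trace_sub,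
    Matrix.trace_sub, t1, t2, t3] at h0
  rw [frobSq_eq_trace]
  have : (k : ℝ) + A.rank = J := by exact_mod_cast hk
  linarith

theorem Fpinv_upper {I J : ℕ} (A : Matrix (Fin I) (Fin J) ℝ) (lam : ℝ) (hl : 0 < lam) :
    Fpinv A lam (PstarId A lam) ≤ (J : ℝ) := by
  set P := PstarId A lam with hP
  have hG : (A * Aᵀ + lam • (1 : Matrix (Fin I) (Fin I) ℝ)).PosDef := by
    refine Matrix.PosDef.posSemidef_add ?_ (Matrix.PosDef.one.smul hl)
    simpa using Matrix.posSemidef_self_mul_conjTranspose A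
  have hGP : (A * Aᵀ + lam • (1 : Matrix (Fin I) (Fin I) ℝ)) * P = A := by
    rw [hP, PstarId, ← Matrix.mul_assoc, Matrix.mul_nonsing_inv _ ((Matrix.isUnit_iff_isUnit_det _).mp hG.isUnit),
      Matrix.one_mul]
  have e1 : trace (Pᵀ * A) = frobSq (Aᵀ * P) + lam * frobSq P := by
    conv_lhs => rw [← hGP]
    simp only [frobSq_eq_trace, Matrix.add_mul, Matrix.mul_add, Matrix.trace_add,
      Matrix.transpose_mul, Matrix.transpose_transpose, Matrix.mul_assoc]
    simp
  have e2 : trace (Aᵀ * P) = trace (Pᵀ * A) := by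
    rw [← Matrix.trace_transpose]; simp
  have e3 : trace (Aᵀ * P * (Pᵀ * A)) = frobSq (Aᵀ * P) := by
    rw [frobSq_eq_trace, Matrix.trace_mul_comm]; simp
  have e4 : frobSq ((1 : Matrix (Fin J) (Fin J) ℝ) - Pᵀ * A)
      = J - 2 * trace (Pᵀ * A) + frobSq (Aᵀ * P) := by
    rw [frobSq_eq_trace, Matrix.transpose_sub, Matrix.transpose_mul, Matrix.transpose_transpose,
      Matrix.sub_mul, Matrix.mul_sub, Matrix.mul_sub, Matrix.trace_sub, Matrix.trace_sub,
      Matrix.trace_sub, e3]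
    simp [e2]; ring
  have n1 := frobSq_nonneg (Aᵀ * P)
  have n2 := mul_nonneg hl.le (frobSq_nonneg P)
  rw [Fpinv, e4]
  linarith

/-- For `λ ≥ 0` and every `P`, `F_λ(P) ≥ J − rank(A)`; moreover for `λ > 0` the
minimum value satisfies `F_λ(P*_λ) ≤ J`. -/
theorem Fpinv_lower_and_upper_bounds {I J : ℕ}
    (A : Matrix (Fin I) (Fin J) ℝ) (lam : ℝ) (hlam : 0 ≤ lam) :
    (∀ P : Matrix (Fin I) (Fin J) ℝ, Fpinv A lam P ≥ (J : ℝ) - (A.rank : ℝ)) ∧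
    (0 < lam → Fpinv A lam (PstarId A lam) ≤ (J : ℝ)) := by
  refine ⟨fun P => ?_, Fpinv_upper A lam⟩
  have h := Fpinv_lower A P
  have h2 := mul_nonneg hlam (frobSq_nonneg P)
  rw [Fpinv]
  linarith
end
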